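/- Let K be a field of characteristic 0, let A be a Cohen-Macaulay standard graded K-algebra of even Krull dimension d with h-polynomial h_A(t), and let Θ = θ_1,…,θ_d be a linear system of parameters for A. If r ≥ max{d, 2·deg h_A(t) − d}, then A_Θ^⟨r⟩ has the weak Lefschetz property. -/

import Mathlib

/-!
Multiplication by `X₁ + ⋯ + X_d` and the operator `∑ j, (b j ∂_j - X_j ∂_j²)` generate an action of
`sl₂` on the monomial complete intersection `K[X] / (X_j ^ (b j + 1))`, of socle degree `∑ j, b j`,
so in characteristic `0` the powers of `X₁ + ⋯ + X_d` have full rank on it.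

As `θ` is a regular sequence of linear forms, `A` is free over `K[θ]` on any homogeneous lift `e` of
a basis of `A / θA`. The Hilbert series of `A / θA` is `h_A`, so the elements of `e` have degree at
most `deg h_A`, and `A / (θ_j ^ r)` is a direct sum of copies of `K[X] / (X_j ^ r)`, shifted by
these degrees. Hence `w = (θ₁ + ⋯ + θ_d) ^ r` can be studied one coordinate at a time: out of
degree `i * r` it is injective when `2 * i + 2 ≤ d`, as `d ≤ r` and shifts only help, and onto
degree `(i + 1) * r` it is surjective when `d ≤ 2 * i`, as `2 * deg h_A ≤ r + d` absorbs the
shifts. For even `d` every `i` falls under one of the two.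
-/

/-- The degree-`i` component of the ideal `(θ₁^r, …, θ_d^r) A^⟨r⟩` of the `r`-th Veronese
subalgebra `A^⟨r⟩ = ⊕_i A_{ir}`, viewed as a `K`-submodule of `A`:
it is `0` in degree `0` and `θ₁^r A_{ir} + ⋯ + θ_d^r A_{ir}` in degree `i+1`.
The degree-`i` component of `A_Θ^⟨r⟩ = A^⟨r⟩/(θ₁^r, …, θ_d^r)A^⟨r⟩` is then
`𝒜 (i*r) ⧸ veroneseLsopIdealComponent K 𝒜 θ r i`. -/
noncomputable def veroneseLsopIdealComponent (K : Type*) {A : Type*} [CommRing K] [CommRing A]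
    [Algebra K A] (𝒜 : ℕ → Submodule K A) {d : ℕ} (θ : Fin d → A) (r : ℕ) :
    ℕ → Submodule K A
  | 0 => ⊥
  | (i + 1) => ⨆ j : Fin d, Submodule.map (LinearMap.mulLeft K (θ j ^ r)) (𝒜 (i * r))

namespace VeroneseLefschetz

open MvPolynomial

section LefschetzPair

/-- The weight-space form of a lowest weight `sl₂`-module: `L` raises and `Λ` lowers the degree of
the pieces `V q`, and `[Λ, L]` acts on `V q` as the scalar `N - 2 * q`. -/
structure IsLefschetzPair {K M : Type*} [CommRing K] [AddCommGroup M] [Module K M]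
    (V : ℕ → Submodule K M) (L Λ : Module.End K M) (N : ℕ) : Prop where
  raise_mem {q : ℕ} {v : M} : v ∈ V q → L v ∈ V (q + 1)
  lower_mem {q : ℕ} {v : M} : v ∈ V (q + 1) → Λ v ∈ V q
  lower_eq_zero {v : M} : v ∈ V 0 → Λ v = 0
  lower_raise {q : ℕ} {v : M} : v ∈ V q → Λ (L v) = L (Λ v) + ((N : K) - 2 * q) • v

namespace IsLefschetzPair

section CommRing

variable {K M : Type*} [CommRing K] [AddCommGroup M] [Module K M]
  {V : ℕ → Submodule K M} {L Λ : Module.End K M} {N : ℕ}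

lemma raise_pow_mem (hV : IsLefschetzPair V L Λ N) {q : ℕ} {v : M} (hv : v ∈ V q) (k : ℕ) :
    (L ^ k) v ∈ V (q + k) := by
  induction k with
  | zero => simpa
  | succ k ih =>
    rw [pow_succ', Module.End.mul_apply]
    exact hV.raise_mem ih

lemma lower_raise_pow (hV : IsLefschetzPair V L Λ N) {p : ℕ} {v : M} (hv : v ∈ V p) (k : ℕ) :
    Λ ((L ^ (k + 1)) v) =
      (L ^ (k + 1)) (Λ v) + ((k + 1 : K) * (N - 2 * p - k)) • (L ^ k) v := by
  induction k with
  | zero => simpa using hV.lower_raise hv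
  | succ k ih =>
    rw [pow_succ' L (k + 1), Module.End.mul_apply, Module.End.mul_apply,
      hV.lower_raise (hV.raise_pow_mem hv (k + 1)), ih, map_add, map_smul, add_assoc,
      ← Module.End.mul_apply L (L ^ k), ← pow_succ', ← add_smul]
    congr 2
    push_cast
    ring

end CommRing

variable {K M : Type*} [Field K] [CharZero K] [AddCommGroup M] [Module K M]
  {V : ℕ → Submodule K M} {L Λ : Module.End K M} {N : ℕ}

lemma lower_raise_pow_coeff_ne_zero {p k : ℕ} (h : N ≠ 2 * p + k) :
    (k + 1 : K) * (N - 2 * p - k) ≠ 0 := by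
  refine mul_ne_zero (Nat.cast_add_one_ne_zero k) fun h₀ => h ?_
  rw [sub_sub, sub_eq_zero] at h₀
  exact_mod_cast h₀

lemma eq_zero_of_lower_eq_zero (hV : IsLefschetzPair V L Λ N) {p k : ℕ} (hpk : 2 * p + k ≤ N)
    {v : M} (hv : v ∈ V p) (hΛ : Λ v = 0) (hL : (L ^ k) v = 0) : v = 0 := by
  induction k with
  | zero => simpa using hL
  | succ k ih =>
    refine ih (by omega) ?_
    have hcomm := hV.lower_raise_pow hv k
    rw [hL, hΛ, map_zero, map_zero, zero_add] at hcomm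
    exact (smul_eq_zero.1 hcomm.symm).resolve_left (lower_raise_pow_coeff_ne_zero (by omega))

theorem eq_zero_of_raise_pow_eq_zero (hV : IsLefschetzPair V L Λ N) {p k : ℕ}
    (hpk : 2 * p + k ≤ N) {v : M} (hv : v ∈ V p) (hL : (L ^ k) v = 0) : v = 0 := by
  induction p generalizing k v with
  | zero => exact hV.eq_zero_of_lower_eq_zero hpk hv (hV.lower_eq_zero hv) hL
  | succ p ih =>
    have hΛ : (L ^ (k + 1)) (Λ v) = 0 := by
      have hcomm := hV.lower_raise_pow hv k
      rwa [pow_succ' L k, Module.End.mul_apply, hL, map_zero, map_zero, smul_zero, add_zero,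
        ← pow_succ' L k, eq_comm] at hcomm
    exact hV.eq_zero_of_lower_eq_zero hpk hv (ih (by omega) (hV.lower_mem hv) hΛ) hL

-- Applying `Λ` to `L ^ (k + 1) u = L ^ (k + 2) v` expresses `L ^ k u` through `L ^ (k + 1)`.
lemma exists_raise_pow_eq_of_raise_eq (hV : IsLefschetzPair V L Λ N) {p k : ℕ}
    (hpk : N ≠ 2 * (p + 1) + k) {u v : M} (hu : u ∈ V (p + 1)) (hv : v ∈ V p)
    (huv : (L ^ (k + 1)) u = (L ^ (k + 2)) v) :
    ∃ z ∈ V p, (L ^ (k + 1)) z = (L ^ k) u := by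
  have hc : (k + 1 : K) * (N - 2 * (p + 1 : ℕ) - k) ≠ 0 := lower_raise_pow_coeff_ne_zero hpk
  set c := (k + 1 : K) * (N - 2 * (p + 1 : ℕ) - k)
  set c' := ((k + 1 : ℕ) + 1 : K) * (N - 2 * p - (k + 1 : ℕ))
  have hΛv : L (Λ v) ∈ V p := by
    cases p with
    | zero => simp [hV.lower_eq_zero hv]
    | succ p => exact hV.raise_mem (hV.lower_mem hv)
  refine ⟨c⁻¹ • (L (Λ v) + c' • v - Λ u), Submodule.smul_mem _ _ (sub_mem
    (add_mem hΛv (Submodule.smul_mem _ _ hv)) (hV.lower_mem hu)), ?_⟩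
  have hcomm : (L ^ (k + 1)) (Λ u) + c • (L ^ k) u =
      (L ^ (k + 1)) (L (Λ v)) + c' • (L ^ (k + 1)) v := by
    rw [← hV.lower_raise_pow hu k, huv, hV.lower_raise_pow hv (k + 1), pow_succ L (k + 1),
      Module.End.mul_apply]
  rw [map_smul, map_sub, map_add, map_smul, ← hcomm, add_sub_cancel_left, inv_smul_smul₀ hc]

theorem exists_raise_pow_eq (hV : IsLefschetzPair V L Λ N) (hN : ∀ q, N < q → V q = ⊥) {p k : ℕ}
    (hpk : N ≤ 2 * p + k) {v : M} (hv : v ∈ V (p + k)) : ∃ u ∈ V p, (L ^ k) u = v := by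
  induction hn : N + 1 - (p + k) generalizing p k v with
  | zero =>
    rw [hN (p + k) (by omega), Submodule.mem_bot] at hv
    exact ⟨0, zero_mem _, by rw [hv, map_zero]⟩
  | succ n ihn =>
    induction k generalizing p with
    | zero => exact ⟨v, hv, by simp⟩
    | succ k ihk =>
      obtain ⟨u, hu, rfl⟩ : ∃ u ∈ V (p + 1), (L ^ k) u = v :=
        ihk (by omega) (by rwa [add_right_comm]) (by omega)
      obtain ⟨w, hw, huw⟩ : ∃ w ∈ V p, (L ^ (k + 2)) w = (L ^ (k + 1)) u :=
        ihn (by omega) (by simpa [add_comm, add_left_comm] using hV.raise_pow_mem hu (k + 1))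
          (by omega)
      exact hV.exists_raise_pow_eq_of_raise_eq (by omega) hu hw huw.symm

end IsLefschetzPair

end LefschetzPair

section MonomialCompleteIntersection

variable {σ K : Type*} [CommRing K]

/-- The monomial complete intersection ideal `(X_j ^ (b j + 1))_j`. Writing the exponents as
`b j + 1` makes the socle degree of the quotient `∑ j, b j`. -/
noncomputable def powIdeal (K : Type*) [CommRing K] (b : σ → ℕ) : Ideal (MvPolynomial σ K) :=
  Ideal.span (Set.range fun j => X j ^ (b j + 1))

lemma X_pow_mem_powIdeal (b : σ → ℕ) (j : σ) :
    (X j : MvPolynomial σ K) ^ (b j + 1) ∈ powIdeal K b :=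
  Ideal.subset_span ⟨j, rfl⟩

/-- The summand `b ∂_j - X_j ∂_j²` of the lowering operator. -/
noncomputable def lowerAt (K : Type*) [CommRing K] (b : ℕ) (j : σ) :
    Module.End K (MvPolynomial σ K) :=
  (b : K) • (pderiv j : Derivation K (MvPolynomial σ K) (MvPolynomial σ K)).toLinearMap -
    LinearMap.mulLeft K (X j) ∘ₗ (pderiv j).toLinearMap ∘ₗ (pderiv j).toLinearMap

lemma lowerAt_apply (b : ℕ) (j : σ) (f : MvPolynomial σ K) :
    lowerAt K b j f = (b : MvPolynomial σ K) * pderiv j f - X j * pderiv j (pderiv j f) := by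
  simp [lowerAt, smul_eq_C_mul]

lemma pderiv_mul_X_pow_self (n : ℕ) (j : σ) (f : MvPolynomial σ K) :
    pderiv j (f * X j ^ (n + 1)) = pderiv j f * X j ^ (n + 1) + (n + 1) • (f * X j ^ n) := by
  simp only [pderiv_mul, pderiv_pow, pderiv_X_self, nsmul_eq_mul, Nat.add_sub_cancel]
  ring

lemma lowerAt_mul_X_pow_self (b : ℕ) (j : σ) (f : MvPolynomial σ K) :
    lowerAt K b j (f * X j ^ (b + 1)) =
      (-((b : MvPolynomial σ K) + 2) * pderiv j f - X j * pderiv j (pderiv j f)) *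
        X j ^ (b + 1) := by
  simp only [lowerAt_apply, pderiv_mul_X_pow_self, map_add, map_nsmul]
  cases b with
  | zero =>
    simp only [zero_add, pow_zero, mul_one, Nat.cast_zero, one_smul]
    ring
  | succ b =>
    simp only [pderiv_mul_X_pow_self, nsmul_eq_mul]
    push_cast
    ring

lemma lowerAt_mul_X_pow_of_ne (b : ℕ) {i j : σ} (hij : i ≠ j) (n : ℕ) (f : MvPolynomial σ K) :
    lowerAt K b j (f * X i ^ n) = lowerAt K b j f * X i ^ n := by
  simp only [lowerAt_apply, pderiv_mul, pderiv_pow, pderiv_X_of_ne hij, mul_zero, add_zero]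
  ring

lemma lowerAt_mem_powIdeal (b : σ → ℕ) (j : σ) {f : MvPolynomial σ K} (hf : f ∈ powIdeal K b) :
    lowerAt K (b j) j f ∈ powIdeal K b := by
  obtain ⟨c, rfl⟩ := Finsupp.mem_ideal_span_range_iff_exists_finsupp.1 hf
  rw [Finsupp.sum, map_sum]
  refine sum_mem fun i _ => ?_
  by_cases hij : i = j
  · subst hij
    rw [lowerAt_mul_X_pow_self]
    exact Ideal.mul_mem_left _ _ (X_pow_mem_powIdeal b i)
  · rw [lowerAt_mul_X_pow_of_ne _ hij]
    exact Ideal.mul_mem_left _ _ (X_pow_mem_powIdeal b i)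

lemma lowerAt_isHomogeneous (b : ℕ) (j : σ) {q : ℕ} {f : MvPolynomial σ K}
    (hf : f.IsHomogeneous (q + 1)) : (lowerAt K b j f).IsHomogeneous q := by
  have hf' : (pderiv j f).IsHomogeneous q := hf.pderiv
  rw [lowerAt_apply, ← map_natCast C b]
  refine (hf'.C_mul _).sub ?_
  cases q with
  | zero =>
    rw [← totalDegree_zero_iff_isHomogeneous, totalDegree_eq_zero_iff_eq_C] at hf'
    rw [hf', pderiv_C, mul_zero]
    exact isHomogeneous_zero ..
  | succ q =>
    rw [add_comm q]
    exact (isHomogeneous_X K j).mul hf'.pderiv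

lemma lowerAt_eq_zero (b : ℕ) (j : σ) {f : MvPolynomial σ K} (hf : f.IsHomogeneous 0) :
    lowerAt K b j f = 0 := by
  rw [← totalDegree_zero_iff_isHomogeneous, totalDegree_eq_zero_iff_eq_C] at hf
  rw [lowerAt_apply, hf]
  simp

variable [Fintype σ]

lemma mem_powIdeal_of_sum_lt (b : σ → ℕ) {q : ℕ} (hq : ∑ j, b j < q) {f : MvPolynomial σ K}
    (hf : f.IsHomogeneous q) : f ∈ powIdeal K b := by
  rw [f.as_sum]
  refine Ideal.sum_mem _ fun m hm => ?_
  have hdeg : ∑ j, m j = q := by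
    rw [← Finsupp.degree_eq_sum, ← hf (mem_support_iff.1 hm), Finsupp.degree_eq_weight_one]
    rfl
  obtain ⟨j, -, hj⟩ : ∃ j ∈ Finset.univ, b j < m j :=
    Finset.exists_lt_of_sum_lt (hq.trans_eq hdeg.symm)
  refine Ideal.mem_of_dvd _ ?_ (X_pow_mem_powIdeal b j)
  rw [X_pow_eq_monomial, monomial_dvd_monomial]
  exact ⟨Or.inr (Finsupp.single_le_iff.2 hj), one_dvd _⟩

/-- The sum of the variables, the strong Lefschetz element of `K[X] / powIdeal K b`. -/
noncomputable def varSum (σ K : Type*) [CommRing K] [Fintype σ] : MvPolynomial σ K :=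
  ∑ j, X j

lemma varSum_isHomogeneous : (varSum σ K).IsHomogeneous 1 :=
  IsHomogeneous.sum _ _ _ fun j _ => isHomogeneous_X K j

lemma pderiv_varSum (j : σ) : pderiv j (varSum σ K) = 1 := by
  classical
  simp [varSum, pderiv_X, Pi.single_apply]

/-- The lowering operator `∑ j, (b j ∂_j - X_j ∂_j²)` of the `sl₂`-action on
`K[X] / powIdeal K b`. -/
noncomputable def lower (K : Type*) [CommRing K] (b : σ → ℕ) : Module.End K (MvPolynomial σ K) :=
  ∑ j, lowerAt K (b j) j

lemma lower_varSum_mul (b : σ → ℕ) {q : ℕ} {f : MvPolynomial σ K} (hf : f.IsHomogeneous q) :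
    lower K b (varSum σ K * f) =
      varSum σ K * lower K b f + (((∑ j, b j : ℕ) : K) - 2 * q) • f := by
  have hcomm (j : σ) : lowerAt K (b j) j (varSum σ K * f) =
      varSum σ K * lowerAt K (b j) j f + (b j : MvPolynomial σ K) * f - 2 * (X j * pderiv j f) := by
    simp only [lowerAt_apply, pderiv_mul, pderiv_varSum, map_add, one_mul]
    ring
  simp only [lower, LinearMap.sum_apply, hcomm, Finset.sum_sub_distrib, Finset.sum_add_distrib,
    ← Finset.mul_sum, ← Finset.sum_mul, hf.sum_X_mul_pderiv, smul_eq_C_mul, map_sub, map_mul,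
    map_natCast, map_ofNat, nsmul_eq_mul]
  push_cast
  ring

/-- The degree `q` component of `K[X] / powIdeal K b`. -/
noncomputable def quotComponent (K : Type*) [CommRing K] (b : σ → ℕ) (q : ℕ) :
    Submodule K (MvPolynomial σ K ⧸ (powIdeal K b).restrictScalars K) :=
  (homogeneousSubmodule σ K q).map (Submodule.mkQ _)

lemma quotComponent_eq_bot (b : σ → ℕ) {q : ℕ} (hq : ∑ j, b j < q) :
    quotComponent K b q = ⊥ := by
  rw [eq_bot_iff]
  rintro _ ⟨f, hf, rfl⟩
  exact (Submodule.Quotient.mk_eq_zero _).2 (mem_powIdeal_of_sum_lt b hq hf)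

lemma powIdeal_le_comap_mulLeft (b : σ → ℕ) :
    (powIdeal K b).restrictScalars K ≤
      ((powIdeal K b).restrictScalars K).comap (LinearMap.mulLeft K (varSum σ K)) :=
  fun _ hf => Ideal.mul_mem_left _ _ hf

/-- Multiplication by `varSum σ K` on `K[X] / powIdeal K b`. -/
noncomputable def quotRaise (K : Type*) [CommRing K] (b : σ → ℕ) :
    Module.End K (MvPolynomial σ K ⧸ (powIdeal K b).restrictScalars K) :=
  Submodule.mapQ _ _ (LinearMap.mulLeft K (varSum σ K)) (powIdeal_le_comap_mulLeft b)

lemma powIdeal_le_comap_lower (b : σ → ℕ) :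
    (powIdeal K b).restrictScalars K ≤
      ((powIdeal K b).restrictScalars K).comap (lower K b) := by
  intro f hf
  rw [Submodule.mem_comap, lower, LinearMap.sum_apply]
  exact sum_mem fun j _ => lowerAt_mem_powIdeal b j hf

/-- The operator induced by `lower K b` on `K[X] / powIdeal K b`. -/
noncomputable def quotLower (K : Type*) [CommRing K] (b : σ → ℕ) :
    Module.End K (MvPolynomial σ K ⧸ (powIdeal K b).restrictScalars K) :=
  Submodule.mapQ _ _ (lower K b) (powIdeal_le_comap_lower b)

theorem isLefschetzPair_quotRaise_quotLower (b : σ → ℕ) :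
    IsLefschetzPair (quotComponent K b) (quotRaise K b) (quotLower K b) (∑ j, b j) where
  raise_mem := by
    rintro q _ ⟨f, hf, rfl⟩
    exact ⟨_, add_comm 1 q ▸ varSum_isHomogeneous.mul hf, rfl⟩
  lower_mem := by
    rintro q _ ⟨f, hf, rfl⟩
    refine ⟨lower K b f, ?_, rfl⟩
    rw [lower, LinearMap.sum_apply]
    exact IsHomogeneous.sum _ _ _ fun j _ => lowerAt_isHomogeneous _ j hf
  lower_eq_zero := by
    rintro _ ⟨f, hf, rfl⟩
    have hlower : lower K b f = 0 := by
      rw [lower, LinearMap.sum_apply]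
      exact Finset.sum_eq_zero fun j _ => lowerAt_eq_zero _ j hf
    simp [quotLower, hlower]
  lower_raise := by
    rintro q _ ⟨f, hf, rfl⟩
    simp only [quotRaise, quotLower, Submodule.mkQ_apply, Submodule.mapQ_apply,
      LinearMap.mulLeft_apply, lower_varSum_mul b hf, Submodule.Quotient.mk_add,
      Submodule.Quotient.mk_smul]

lemma quotRaise_pow_mk (b : σ → ℕ) (k : ℕ) (f : MvPolynomial σ K) :
    (quotRaise K b ^ k) (Submodule.Quotient.mk f) =
      Submodule.Quotient.mk (varSum σ K ^ k * f) := by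
  rw [quotRaise, ← Submodule.mapQ_pow, Submodule.mapQ_apply, LinearMap.pow_mulLeft,
    LinearMap.mulLeft_apply]

theorem mem_powIdeal_of_varSum_pow_mul_mem {K : Type*} [Field K] [CharZero K] (b : σ → ℕ)
    {p k : ℕ} (hpk : 2 * p + k ≤ ∑ j, b j) {f : MvPolynomial σ K} (hf : f.IsHomogeneous p)
    (h : varSum σ K ^ k * f ∈ powIdeal K b) : f ∈ powIdeal K b := by
  have hL : (quotRaise K b ^ k) (Submodule.Quotient.mk f) = 0 := by
    rw [quotRaise_pow_mk]
    exact (Submodule.Quotient.mk_eq_zero _).2 h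
  exact (Submodule.Quotient.mk_eq_zero ((powIdeal K b).restrictScalars K)).1
    ((isLefschetzPair_quotRaise_quotLower b).eq_zero_of_raise_pow_eq_zero hpk ⟨f, hf, rfl⟩ hL)

theorem mem_span_varSum_pow_sup_powIdeal {K : Type*} [Field K] [CharZero K] (b : σ → ℕ)
    {q k : ℕ} (hqk : ∑ j, b j + k ≤ 2 * q) {f : MvPolynomial σ K} (hf : f.IsHomogeneous q) :
    f ∈ Ideal.span {varSum σ K ^ k} ⊔ powIdeal K b := by
  by_cases hq : ∑ j, b j < q
  · exact Ideal.mem_sup_right (mem_powIdeal_of_sum_lt b hq hf)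
  obtain ⟨p, rfl⟩ := Nat.exists_eq_add_of_le' (show k ≤ q by omega)
  obtain ⟨_, ⟨g, -, rfl⟩, hg⟩ :=
    (isLefschetzPair_quotRaise_quotLower b).exists_raise_pow_eq
      (fun _ => quotComponent_eq_bot b) (by omega) ⟨f, hf, rfl⟩
  rw [Submodule.mkQ_apply, quotRaise_pow_mk, eq_comm, Submodule.mkQ_apply,
    Submodule.Quotient.eq] at hg
  rw [← add_sub_cancel (varSum σ K ^ k * g) f]
  exact add_mem (Ideal.mem_sup_left (Ideal.mul_mem_right _ _ (Ideal.mem_span_singleton_self _)))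
    (Ideal.mem_sup_right hg)

end MonomialCompleteIntersection

section RegularSequence

/-- The family `e` in the `R`-module `M` is linearly independent over `P`, which acts on `M`
through the ring homomorphism `φ`. Spelling out the action avoids installing a module structure
for each of the rings `P` that occur in an induction. -/
def LinearIndependentAlong {P R M ι : Type*} [CommRing P] [CommRing R] [AddCommGroup M]
    [Module R M] (φ : P →+* R) (e : ι → M) : Prop :=
  ∀ F : ι →₀ P, (F.sum fun b f => φ f • e b) = 0 → F = 0

open scoped Pointwise

namespace LinearIndependentAlong

variable {P Q R M N ι : Type*} [CommRing P] [CommRing Q] [CommRing R] [AddCommGroup M] [Module R M]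
  [AddCommGroup N] [Module R N] {φ : P →+* R} {e : ι → M}

lemma comp_injective (he : LinearIndependentAlong φ e) {ψ : Q →+* P}
    (hψ : Function.Injective ψ) : LinearIndependentAlong (φ.comp ψ) e := by
  intro F hF
  have hmap : F.mapRange ψ (map_zero ψ) = 0 := by
    refine he _ ?_
    rw [Finsupp.sum_mapRange_index fun b => by rw [map_zero, zero_smul]]
    exact hF
  ext b
  exact (map_eq_zero_iff ψ hψ).1 (DFunLike.congr_fun hmap b)

lemma map_linearEquiv (he : LinearIndependentAlong φ e) (g : M ≃ₗ[R] N) :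
    LinearIndependentAlong φ (g ∘ e) := by
  intro F hF
  refine he F (g.injective ?_)
  rw [map_zero, ← hF, map_finsuppSum]
  simp only [map_smul, Function.comp_apply]

lemma coeff_zero_eq_zero {t : R}
    (he : LinearIndependentAlong φ (Submodule.mkQ (t • (⊤ : Submodule R M)) ∘ e))
    {F : ι →₀ Polynomial P} (hF : (F.sum fun b f => f.eval₂ φ t • e b) = 0) (b : ι) :
    (F b).coeff 0 = 0 := by
  have hmk (f : Polynomial P) (x : M) : Submodule.mkQ (t • (⊤ : Submodule R M)) (f.eval₂ φ t • x) =
      φ (f.coeff 0) • Submodule.mkQ _ x := by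
    have ht : Submodule.mkQ (t • (⊤ : Submodule R M)) (t • f.divX.eval₂ φ t • x) = 0 :=
      (Submodule.Quotient.mk_eq_zero _).2 (Submodule.smul_mem_pointwise_smul _ _ _ trivial)
    conv_lhs => rw [← f.divX_mul_X_add]
    rw [Polynomial.eval₂_add, Polynomial.eval₂_mul, Polynomial.eval₂_X, Polynomial.eval₂_C,
      add_smul, mul_comm, mul_smul, map_add, ht, zero_add, map_smul]
  have hsum := congr(Submodule.mkQ (t • (⊤ : Submodule R M)) $hF)
  rw [map_finsuppSum, map_zero] at hsum
  simp only [hmk] at hsum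
  have hcoeff := he (F.mapRange (Polynomial.coeff · 0) (Polynomial.coeff_zero 0)) (by
    rwa [Finsupp.sum_mapRange_index fun b => by rw [map_zero, zero_smul]])
  exact DFunLike.congr_fun hcoeff b

theorem eval₂ {t : R} (ht : IsSMulRegular M t)
    (he : LinearIndependentAlong φ (Submodule.mkQ (t • (⊤ : Submodule R M)) ∘ e)) :
    LinearIndependentAlong (Polynomial.eval₂RingHom φ t) e := by
  intro F hF
  simp only [Polynomial.coe_eval₂RingHom] at hF
  suffices h : ∀ n b, (F b).coeff n = 0 by
    ext b n
    exact h n b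
  intro n
  induction n generalizing F with
  | zero => exact coeff_zero_eq_zero he hF
  | succ n ih =>
    have hdivX : ((F.mapRange Polynomial.divX Polynomial.divX_zero).sum
        fun b f => f.eval₂ φ t • e b) = 0 := by
      rw [Finsupp.sum_mapRange_index fun b => by rw [Polynomial.eval₂_zero, zero_smul]]
      refine ht.right_eq_zero_of_smul ?_
      rw [Finsupp.smul_sum, ← hF]
      refine Finsupp.sum_congr fun b _ => ?_
      conv_rhs => rw [← (F b).divX_mul_X_add, coeff_zero_eq_zero he hF b]
      simp [mul_smul, mul_comm]
    intro b
    rw [← Polynomial.coeff_divX]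
    exact ih _ hdivX b

end LinearIndependentAlong

lemma aeval_eq_eval₂_comp_finSuccEquiv {K R : Type*} [CommRing K] [CommRing R] [Algebra K R]
    {d : ℕ} (θ : Fin (d + 1) → R) :
    (aeval θ : MvPolynomial (Fin (d + 1)) K →ₐ[K] R).toRingHom =
      (Polynomial.eval₂RingHom (aeval (Fin.tail θ) : MvPolynomial (Fin d) K →ₐ[K] R).toRingHom
        (θ 0)).comp (finSuccEquiv K d).toRingEquiv.toRingHom := by
  refine MvPolynomial.ringHom_ext (fun c => ?_) fun j => ?_
  · simp [finSuccEquiv_apply]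
  · cases j using Fin.cases <;> simp [finSuccEquiv_X_zero, finSuccEquiv_X_succ, Fin.tail]

lemma ideal_ofList_ofFn {R : Type*} [CommRing R] {d : ℕ} (θ : Fin d → R) :
    Ideal.ofList (List.ofFn θ) = Ideal.span (Set.range θ) :=
  congrArg Ideal.span (Set.ext fun _ => List.mem_ofFn' θ _)

open RingTheory.Sequence in
theorem linearIndependentAlong_aeval {K R M ι : Type*} [CommRing K] [CommRing R] [Algebra K R]
    [AddCommGroup M] [Module R M] {d : ℕ} {θ : Fin d → R}
    (hθ : IsWeaklyRegular M (List.ofFn θ)) {e : ι → M}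
    (he : LinearIndependentAlong (algebraMap K R)
      (Submodule.mkQ (Ideal.ofList (List.ofFn θ) • (⊤ : Submodule R M)) ∘ e)) :
    LinearIndependentAlong (aeval θ : MvPolynomial (Fin d) K →ₐ[K] R).toRingHom e := by
  induction d generalizing M with
  | zero =>
    have haeval : (aeval θ : MvPolynomial (Fin 0) K →ₐ[K] R).toRingHom =
        (algebraMap K R).comp (isEmptyRingEquiv K (Fin 0)).toRingHom :=
      MvPolynomial.ringHom_ext
        (fun c => (aeval_C θ c).trans (congrArg _ (coeff_zero_C c).symm)) isEmptyElim
    have hbot : Ideal.ofList (List.ofFn θ) • (⊤ : Submodule R M) = ⊥ := by simp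
    rw [haeval]
    exact (he.map_linearEquiv (Submodule.quotEquivOfEqBot _ hbot)).comp_injective
      (isEmptyRingEquiv K (Fin 0)).injective
  | succ d ih =>
    rw [List.ofFn_succ] at hθ he
    rw [isWeaklyRegular_cons_iff] at hθ
    rw [aeval_eq_eval₂_comp_finSuccEquiv]
    refine (LinearIndependentAlong.eval₂ hθ.1 (ih hθ.2 ?_)).comp_injective
      (finSuccEquiv K d).injective
    exact he.map_linearEquiv (Submodule.quotOfListConsSMulTopEquivQuotSMulTopInner M _ _)

end RegularSequence

section GradedFreeness

variable {σ K A ι : Type*} [CommRing K] [CommRing A] [Algebra K A] {𝒜 : ℕ → Submodule K A}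
  [GradedAlgebra 𝒜] [Algebra (MvPolynomial σ K) A] [IsScalarTower K (MvPolynomial σ K) A]
  {deg : ι → ℕ}

lemma algebraMap_mem_of_isHomogeneous (hX : ∀ j, algebraMap (MvPolynomial σ K) A (X j) ∈ 𝒜 1)
    {n : ℕ} {f : MvPolynomial σ K} (hf : f.IsHomogeneous n) :
    algebraMap (MvPolynomial σ K) A f ∈ 𝒜 n := by
  rw [f.as_sum, map_sum]
  refine sum_mem fun m hm => ?_
  have hprod : (m.prod fun j k => algebraMap (MvPolynomial σ K) A (X j) ^ k) ∈ 𝒜 n := by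
    rw [← hf (mem_support_iff.1 hm), Finsupp.weight_apply]
    exact SetLike.prod_pow_mem_graded 𝒜 _ _ _ fun j _ => hX j
  rw [monomial_eq, ← smul_eq_C_mul, ← IsScalarTower.coe_toAlgHom' K, map_smul, map_finsuppProd]
  simpa only [map_pow, IsScalarTower.coe_toAlgHom'] using Submodule.smul_mem _ _ hprod

lemma algebraMap_varSum_pow_mem [Fintype σ]
    (hX : ∀ j, algebraMap (MvPolynomial σ K) A (X j) ∈ 𝒜 1) (k : ℕ) :
    algebraMap (MvPolynomial σ K) A (varSum σ K ^ k) ∈ 𝒜 k :=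
  algebraMap_mem_of_isHomogeneous hX (by simpa only [one_mul] using varSum_isHomogeneous.pow k)

attribute [local instance] MvPolynomial.gradedAlgebra in
lemma decompose_algebraMap_apply (hX : ∀ j, algebraMap (MvPolynomial σ K) A (X j) ∈ 𝒜 1) (n : ℕ)
    (f : MvPolynomial σ K) :
    (DirectSum.decompose 𝒜 (algebraMap (MvPolynomial σ K) A f) n : A) =
      algebraMap (MvPolynomial σ K) A (homogeneousComponent n f) := by
  let φ : homogeneousSubmodule σ K →+*ᵍ 𝒜 :=
    { algebraMap (MvPolynomial σ K) A with
      map_mem := algebraMap_mem_of_isHomogeneous hX }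
  exact (φ.map_directSumDecompose (x := f) (i := n)).symm.trans
    (congrArg φ (decomposition.decompose'_apply f n))

lemma repr_decompose (hX : ∀ j, algebraMap (MvPolynomial σ K) A (X j) ∈ 𝒜 1)
    (e : Module.Basis ι (MvPolynomial σ K) A) (he : ∀ b, e b ∈ 𝒜 (deg b)) (n : ℕ) (x : A) (b : ι) :
    e.repr (DirectSum.decompose 𝒜 x n : A) b =
      if deg b ≤ n then homogeneousComponent (n - deg b) (e.repr x b) else 0 := by
  obtain ⟨F, rfl⟩ := e.repr.symm.surjective x
  rw [LinearEquiv.apply_symm_apply]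
  induction F using Finsupp.induction_linear with
  | zero => simp
  | add F G hF hG =>
    rw [map_add, DirectSum.decompose_add, DirectSum.add_apply, Submodule.coe_add, map_add,
      Finsupp.add_apply, hF, hG]
    split_ifs <;> simp
  | single c f =>
    rw [e.repr_symm_single, Algebra.smul_def,
      DirectSum.coe_decompose_mul_of_right_mem 𝒜 n (he c)]
    obtain rfl | hcb := eq_or_ne c b
    · split_ifs <;> simp [decompose_algebraMap_apply hX, ← Algebra.smul_def]
    · split_ifs <;> simp [decompose_algebraMap_apply hX, ← Algebra.smul_def, hcb]

lemma repr_eq_zero_or_isHomogeneous (hX : ∀ j, algebraMap (MvPolynomial σ K) A (X j) ∈ 𝒜 1)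
    (e : Module.Basis ι (MvPolynomial σ K) A) (he : ∀ b, e b ∈ 𝒜 (deg b)) {n : ℕ} {x : A}
    (hx : x ∈ 𝒜 n) (b : ι) :
    e.repr x b = 0 ∨ deg b ≤ n ∧ (e.repr x b).IsHomogeneous (n - deg b) := by
  have hrepr := repr_decompose hX e he n x b
  rw [DirectSum.decompose_of_mem_same 𝒜 hx] at hrepr
  split_ifs at hrepr with hb
  · right
    rw [hrepr]
    exact ⟨hb, homogeneousComponent_isHomogeneous _ _⟩
  · exact .inl hrepr

lemma mem_map_iff_forall_repr_mem {R S : Type*} [CommRing R] [CommRing S] [Algebra R S]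
    (e : Module.Basis ι R S) (I : Ideal R) {x : S} :
    x ∈ I.map (algebraMap R S) ↔ ∀ b, e.repr x b ∈ I := by
  rw [← Submodule.restrictScalars_mem R, ← Ideal.smul_top_eq_map, ← e.span_eq,
    Submodule.mem_ideal_smul_span_iff_exists_sum]
  constructor
  · rintro ⟨a, ha, rfl⟩ b
    rw [← Finsupp.linearCombination_apply, e.repr_linearCombination]
    exact ha b
  · exact fun h => ⟨e.repr x, h, e.linearCombination_repr x⟩

end GradedFreeness

section Lefschetz

variable {σ K A ι : Type*} [Fintype σ] [Field K] [CharZero K] [CommRing A] [Algebra K A]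
  {𝒜 : ℕ → Submodule K A} [GradedAlgebra 𝒜] [Algebra (MvPolynomial σ K) A]
  [IsScalarTower K (MvPolynomial σ K) A] {deg : ι → ℕ}

theorem mem_map_powIdeal_of_varSum_pow_mul_mem
    (hX : ∀ j, algebraMap (MvPolynomial σ K) A (X j) ∈ 𝒜 1)
    (e : Module.Basis ι (MvPolynomial σ K) A) (he : ∀ b, e b ∈ 𝒜 (deg b)) (a : σ → ℕ) {n k : ℕ}
    (hnk : 2 * n + k ≤ ∑ j, a j) {x : A} (hx : x ∈ 𝒜 n)
    (h : algebraMap (MvPolynomial σ K) A (varSum σ K ^ k) * x ∈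
      (powIdeal K a).map (algebraMap (MvPolynomial σ K) A)) :
    x ∈ (powIdeal K a).map (algebraMap (MvPolynomial σ K) A) := by
  rw [mem_map_iff_forall_repr_mem e] at h ⊢
  intro b
  obtain hb | ⟨-, hb⟩ := repr_eq_zero_or_isHomogeneous hX e he hx b
  · rw [hb]
    exact zero_mem _
  · refine mem_powIdeal_of_varSum_pow_mul_mem a (k := k) (by omega) hb ?_
    simpa only [← Algebra.smul_def, map_smul, Finsupp.smul_apply, smul_eq_mul] using h b

theorem mem_span_varSum_pow_sup_map_powIdeal
    (hX : ∀ j, algebraMap (MvPolynomial σ K) A (X j) ∈ 𝒜 1)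
    (e : Module.Basis ι (MvPolynomial σ K) A) (he : ∀ b, e b ∈ 𝒜 (deg b)) {s : ℕ}
    (hs : ∀ b, deg b ≤ s) (a : σ → ℕ) {n k : ℕ} (hnk : ∑ j, a j + k + 2 * s ≤ 2 * n) {x : A}
    (hx : x ∈ 𝒜 n) :
    x ∈ Ideal.span {algebraMap (MvPolynomial σ K) A (varSum σ K ^ k)} ⊔
      (powIdeal K a).map (algebraMap (MvPolynomial σ K) A) := by
  rw [← Set.image_singleton, ← Ideal.map_span, ← Ideal.map_sup, mem_map_iff_forall_repr_mem e]
  intro b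
  obtain hb | ⟨-, hb⟩ := repr_eq_zero_or_isHomogeneous hX e he hx b
  · rw [hb]
    exact zero_mem _
  · have := hs b
    exact mem_span_varSum_pow_sup_powIdeal a (by omega) hb

end Lefschetz

section GradedIdeals

variable {K A τ : Type*} [CommRing K] [CommRing A] [Algebra K A] {𝒜 : ℕ → Submodule K A}
  [GradedAlgebra 𝒜] {t : τ → A} {r n : ℕ} {x : A}

lemma eq_zero_of_mem_span_range_of_lt (ht : ∀ j, t j ∈ 𝒜 r) (hn : n < r) (hx : x ∈ 𝒜 n)
    (hxt : x ∈ Ideal.span (Set.range t)) : x = 0 := by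
  obtain ⟨c, rfl⟩ := Finsupp.mem_ideal_span_range_iff_exists_finsupp.1 hxt
  rw [← DirectSum.decompose_of_mem_same 𝒜 hx, Finsupp.sum, DirectSum.decompose_sum,
    DFinsupp.finsetSum_apply, AddSubmonoidClass.coe_finsetSum]
  exact Finset.sum_eq_zero fun j _ =>
    DirectSum.coe_decompose_mul_of_right_mem_of_not_le 𝒜 (ht j) hn.not_ge

lemma exists_eq_sum_mul_of_mem_span_range [Fintype τ] (ht : ∀ j, t j ∈ 𝒜 r) (hx : x ∈ 𝒜 (n + r))
    (hxt : x ∈ Ideal.span (Set.range t)) :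
    ∃ y : τ → A, (∀ j, y j ∈ 𝒜 n) ∧ ∑ j, t j * y j = x := by
  obtain ⟨c, rfl⟩ := Ideal.mem_span_range_iff_exists_fun.1 hxt
  refine ⟨fun j => DirectSum.decompose 𝒜 (c j) n, fun j => SetLike.coe_mem _, ?_⟩
  conv_rhs => rw [← DirectSum.decompose_of_mem_same 𝒜 hx, DirectSum.decompose_sum,
    DFinsupp.finsetSum_apply, AddSubmonoidClass.coe_finsetSum]
  refine Finset.sum_congr rfl fun j _ => ?_
  rw [DirectSum.coe_decompose_mul_of_right_mem_of_le 𝒜 (ht j) (Nat.le_add_left r n),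
    Nat.add_sub_cancel, mul_comm]

variable {I : Ideal A} {k : ℕ} {w : A}

lemma mem_of_mem_sup_span_of_lt (hI : I.IsHomogeneous 𝒜) (hw : w ∈ 𝒜 k) (hn : n < k)
    (hx : x ∈ 𝒜 n) (hxI : x ∈ I ⊔ Ideal.span {w}) : x ∈ I := by
  obtain ⟨z, hz, y, hy, rfl⟩ := Submodule.mem_sup.1 hxI
  obtain ⟨y, rfl⟩ := Ideal.mem_span_singleton'.1 hy
  rw [← DirectSum.decompose_of_mem_same 𝒜 hx, DirectSum.decompose_add, DirectSum.add_apply,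
    Submodule.coe_add, DirectSum.coe_decompose_mul_of_right_mem_of_not_le 𝒜 hw hn.not_ge, add_zero]
  exact hI n hz

lemma exists_sub_mul_mem_of_mem_sup_span (hI : I.IsHomogeneous 𝒜) (hw : w ∈ 𝒜 k)
    (hx : x ∈ 𝒜 (n + k)) (hxI : x ∈ I ⊔ Ideal.span {w}) : ∃ y ∈ 𝒜 n, x - w * y ∈ I := by
  obtain ⟨z, hz, y, hy, rfl⟩ := Submodule.mem_sup.1 hxI
  obtain ⟨y, rfl⟩ := Ideal.mem_span_singleton'.1 hy
  refine ⟨_, (DirectSum.decompose 𝒜 y n).2, ?_⟩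
  rw [← DirectSum.decompose_of_mem_same 𝒜 hx, DirectSum.decompose_add, DirectSum.add_apply,
    Submodule.coe_add, DirectSum.coe_decompose_mul_of_right_mem_of_le 𝒜 hw (Nat.le_add_left k n),
    Nat.add_sub_cancel, mul_comm w, add_sub_cancel_right]
  exact hI (n + k) hz

lemma map_sup_span_inf_zero (hI : I.IsHomogeneous 𝒜) (hw : w ∈ 𝒜 1) :
    ((I ⊔ Ideal.span {w}).restrictScalars K ⊓ 𝒜 0).map (Ideal.Quotient.mkₐ K I).toLinearMap =
      ⊥ := by
  rw [eq_bot_iff]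
  rintro _ ⟨x, ⟨hxI, hx⟩, rfl⟩
  exact Ideal.Quotient.eq_zero_iff_mem.2 (mem_of_mem_sup_span_of_lt hI hw Nat.zero_lt_one hx hxI)

lemma map_sup_span_inf_succ (hI : I.IsHomogeneous 𝒜) (hw : w ∈ 𝒜 1) (n : ℕ) :
    ((I ⊔ Ideal.span {w}).restrictScalars K ⊓ 𝒜 (n + 1)).map
        (Ideal.Quotient.mkₐ K I).toLinearMap =
      ((𝒜 n).map (Ideal.Quotient.mkₐ K I).toLinearMap).map (LinearMap.mulLeft K (w : A ⧸ I)) := by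
  apply le_antisymm
  · rintro _ ⟨x, ⟨hxI, hx⟩, rfl⟩
    obtain ⟨y, hy, hxy⟩ := exists_sub_mul_mem_of_mem_sup_span hI hw hx hxI
    exact ⟨_, ⟨y, hy, rfl⟩, (Ideal.Quotient.eq.2 hxy).symm⟩
  · rintro _ ⟨_, ⟨y, hy, rfl⟩, rfl⟩
    exact ⟨w * y, ⟨Ideal.mem_sup_right (Ideal.mul_mem_right _ _ (Ideal.mem_span_singleton_self w)),
      add_comm 1 n ▸ SetLike.GradedMul.mul_mem hw hy⟩, rfl⟩

end GradedIdeals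

section HomogeneousBasis

lemma decompose_mem_span_range {K A ι : Type*} [CommRing K] [CommRing A] [Algebra K A]
    {𝒜 : ℕ → Submodule K A} [GradedAlgebra 𝒜] {e : ι → A} {deg : ι → ℕ}
    (he : ∀ b, e b ∈ 𝒜 (deg b)) (n : ℕ) {x : A} (hx : x ∈ Submodule.span K (Set.range e)) :
    (DirectSum.decompose 𝒜 x n : A) ∈ Submodule.span K (Set.range e) := by
  rw [← GradedAlgebra.proj_apply, ← Submodule.mem_comap]
  refine Submodule.span_le.2 ?_ hx
  rintro _ ⟨b, rfl⟩
  rw [SetLike.mem_coe, Submodule.mem_comap, GradedAlgebra.proj_apply,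
    DirectSum.decompose_of_mem 𝒜 (he b), DirectSum.coe_of_apply]
  split_ifs
  · exact Submodule.subset_span ⟨b, rfl⟩
  · exact zero_mem _

-- Graded Nakayama lemma: each component reduces to components of lower degree, so no finiteness
-- of `A` over `S` enters.
lemma span_range_eq_top_of_sup_span_eq_top {K S A ι σ : Type*} [CommRing K] [CommRing S]
    [CommRing A] [Algebra K S] [Algebra K A] [Algebra S A] [IsScalarTower K S A] [Finite σ]
    {𝒜 : ℕ → Submodule K A} [GradedAlgebra 𝒜] {s : σ → S} (hs : ∀ j, algebraMap S A (s j) ∈ 𝒜 1)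
    {e : ι → A} {deg : ι → ℕ} (he : ∀ b, e b ∈ 𝒜 (deg b))
    (htop : (Ideal.span (Set.range fun j => algebraMap S A (s j))).restrictScalars K ⊔
      Submodule.span K (Set.range e) = ⊤) :
    Submodule.span S (Set.range e) = ⊤ := by
  cases nonempty_fintype σ
  have hhom : (Ideal.span (Set.range fun j => algebraMap S A (s j))).IsHomogeneous 𝒜 :=
    Ideal.homogeneous_span 𝒜 _ (by rintro _ ⟨j, rfl⟩; exact ⟨1, hs j⟩)
  have hcomponent (n : ℕ) : ∀ x ∈ 𝒜 n, x ∈ Submodule.span S (Set.range e) := by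
    induction n using Nat.strong_induction_on with
    | h n ih =>
      intro x hx
      obtain ⟨z, hz, u, hu, rfl⟩ := Submodule.mem_sup.1 (htop ▸ Submodule.mem_top (x := x))
      have hz_mem : (DirectSum.decompose 𝒜 z n : A) ∈ Submodule.span S (Set.range e) := by
        cases n with
        | zero =>
          rw [eq_zero_of_mem_span_range_of_lt hs Nat.zero_lt_one (SetLike.coe_mem _) (hhom 0 hz)]
          exact zero_mem _
        | succ n =>
          obtain ⟨y, hy, hyz⟩ :=
            exists_eq_sum_mul_of_mem_span_range hs (SetLike.coe_mem _) (hhom (n + 1) hz)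
          simp only [← hyz, ← Algebra.smul_def]
          exact sum_mem fun j _ => Submodule.smul_mem _ _ (ih n n.lt_succ_self _ (hy j))
      rw [← DirectSum.decompose_of_mem_same 𝒜 hx, DirectSum.decompose_add, DirectSum.add_apply,
        Submodule.coe_add]
      exact add_mem hz_mem
        (Submodule.span_le_restrictScalars K S _ (decompose_mem_span_range he n hu))
  refine eq_top_iff.2 fun x _ => ?_
  classical
  rw [← DirectSum.sum_support_decompose 𝒜 x]
  exact sum_mem fun n _ => hcomponent n _ (SetLike.coe_mem _)

lemma exists_homogeneous_basis_mod.{u} {K : Type*} {A : Type u} [Field K] [CommRing A] [Algebra K A]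
    (𝒜 : ℕ → Submodule K A) [GradedAlgebra 𝒜] (I : Ideal A) :
    ∃ (ι : Type u) (e : ι → A) (deg : ι → ℕ), (∀ b, e b ∈ 𝒜 (deg b)) ∧
      LinearIndependent K (Submodule.mkQ (I.restrictScalars K) ∘ e) ∧
      I.restrictScalars K ⊔ Submodule.span K (Set.range e) = ⊤ := by
  let π := Submodule.mkQ (I.restrictScalars K)
  have hspan : ⊤ ≤ Submodule.span K (π '' {x | SetLike.IsHomogeneousElem 𝒜 x}) := by
    classical
    rw [Submodule.span_image, ← Submodule.range_mkQ, ← Submodule.map_top]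
    refine Submodule.map_mono fun x _ => ?_
    rw [← DirectSum.sum_support_decompose 𝒜 x]
    exact sum_mem fun n _ => Submodule.subset_span ⟨n, SetLike.coe_mem _⟩
  let B := Module.Basis.ofSpan hspan
  choose e he hB using fun b => Module.Basis.ofSpan_subset hspan ⟨b, rfl⟩
  choose deg hdeg using he
  have hcomp : π ∘ e = B := funext hB
  refine ⟨_, e, deg, hdeg, ?_, ?_⟩
  · change LinearIndependent K (π ∘ e)
    rw [hcomp]
    exact B.linearIndependent
  · rw [← Submodule.comap_map_mkQ, Submodule.map_span, ← Set.range_comp]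
    change Submodule.comap π (Submodule.span K (Set.range (π ∘ e))) = ⊤
    rw [hcomp, B.span_eq, Submodule.comap_top]

open RingTheory.Sequence in
theorem exists_homogeneous_basis.{u} {K : Type*} {A : Type u} [Field K] [CommRing A] [Algebra K A]
    (𝒜 : ℕ → Submodule K A) [GradedAlgebra 𝒜] {d : ℕ} [Algebra (MvPolynomial (Fin d) K) A]
    [IsScalarTower K (MvPolynomial (Fin d) K) A]
    (hX : ∀ j, algebraMap (MvPolynomial (Fin d) K) A (X j) ∈ 𝒜 1)
    (hreg : IsWeaklyRegular A (List.ofFn fun j => algebraMap (MvPolynomial (Fin d) K) A (X j))) :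
    ∃ (ι : Type u) (e : Module.Basis ι (MvPolynomial (Fin d) K) A) (deg : ι → ℕ),
      (∀ b, e b ∈ 𝒜 (deg b)) ∧
      ∀ b, e b ∉ Ideal.span (Set.range fun j => algebraMap (MvPolynomial (Fin d) K) A (X j)) := by
  set θ : Fin d → A := fun j => algebraMap (MvPolynomial (Fin d) K) A (X j)
  obtain ⟨ι, e, deg, he, hind, htop⟩ := exists_homogeneous_basis_mod 𝒜 (Ideal.span (Set.range θ))
  have hlin : LinearIndependent (MvPolynomial (Fin d) K) e := by
    rw [linearIndependent_iff]
    intro F hF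
    refine linearIndependentAlong_aeval (e := e) hreg (fun c hc => ?_) F ?_
    · rw [smul_eq_mul, Ideal.mul_top, ideal_ofList_ofFn] at hc
      refine linearIndependent_iff.1 hind c (.trans ?_ hc)
      simp only [Finsupp.linearCombination_apply, algebraMap_smul]
      rfl
    · have hθ : (aeval θ).toRingHom = algebraMap (MvPolynomial (Fin d) K) A :=
        congrArg AlgHom.toRingHom (aeval_unique (IsScalarTower.toAlgHom K _ A)).symm
      simpa only [hθ, algebraMap_smul, Finsupp.linearCombination_apply] using hF
  refine ⟨ι, .mk hlin (span_range_eq_top_of_sup_span_eq_top hX he htop).ge, deg, ?_, ?_⟩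
  · simpa only [Module.Basis.mk_apply] using he
  · intro b hb
    rw [Module.Basis.mk_apply] at hb
    exact hind.ne_zero b ((Submodule.Quotient.mk_eq_zero _).2 hb)

end HomogeneousBasis

section HilbertSeries

lemma finrank_map_comp_add_finrank_map_ker_inf {K M N P : Type*} [Field K] [AddCommGroup M]
    [Module K M] [AddCommGroup N] [Module K N] [AddCommGroup P] [Module K P] (f : M →ₗ[K] N)
    (g : N →ₗ[K] P) (U : Submodule K M) [Module.Finite K U] :
    Module.finrank K (U.map (g ∘ₗ f)) +
        Module.finrank K ((LinearMap.ker (g ∘ₗ f) ⊓ U : Submodule K M).map f) =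
      Module.finrank K (U.map f) := by
  rw [Submodule.map_comp, LinearMap.ker_comp, inf_comm, ← Submodule.map_inf_eq_map_inf_comap,
    ← LinearMap.finrank_range_add_finrank_ker (g.domRestrict (U.map f)),
    LinearMap.range_domRestrict, LinearMap.ker_domRestrict,
    ← Submodule.finrank_map_subtype_eq, Submodule.map_comap_subtype]

variable {K A : Type*} [Field K] [CommRing A] [Algebra K A]

/-- The Hilbert series of the graded algebra `A ⧸ I`, for a homogeneous ideal `I`. -/
noncomputable def quotientHilbertSeries (𝒜 : ℕ → Submodule K A) (I : Ideal A) : PowerSeries ℤ :=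
  .mk fun n => Module.finrank K ((𝒜 n).map (Ideal.Quotient.mkₐ K I).toLinearMap)

lemma quotientHilbertSeries_bot (𝒜 : ℕ → Submodule K A) :
    quotientHilbertSeries 𝒜 ⊥ = .mk fun n => (Module.finrank K (𝒜 n) : ℤ) := by
  ext n
  simp only [quotientHilbertSeries, PowerSeries.coeff_mk]
  exact congrArg _ (LinearEquiv.finrank_map_eq (AlgEquiv.quotientBot K A).symm.toLinearEquiv (𝒜 n))

variable {𝒜 : ℕ → Submodule K A} [GradedAlgebra 𝒜] {I : Ideal A} {t : A}

lemma finrank_map_mk_add_finrank_map_inf {I J : Ideal A} (hIJ : I ≤ J) (U : Submodule K A)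
    [Module.Finite K U] :
    Module.finrank K (U.map (Ideal.Quotient.mkₐ K J).toLinearMap) +
        Module.finrank K ((J.restrictScalars K ⊓ U).map (Ideal.Quotient.mkₐ K I).toLinearMap) =
      Module.finrank K (U.map (Ideal.Quotient.mkₐ K I).toLinearMap) := by
  have hcomp : (Ideal.Quotient.mkₐ K J).toLinearMap =
      (Ideal.Quotient.factorₐ K hIJ).toLinearMap ∘ₗ (Ideal.Quotient.mkₐ K I).toLinearMap := rfl
  have hker : J.restrictScalars K = LinearMap.ker (Ideal.Quotient.mkₐ K J).toLinearMap := by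
    ext x
    exact Ideal.Quotient.eq_zero_iff_mem.symm
  rw [hker, hcomp]
  exact finrank_map_comp_add_finrank_map_ker_inf _ _ U

theorem quotientHilbertSeries_sup_span [∀ n, Module.Finite K (𝒜 n)] (hI : I.IsHomogeneous 𝒜)
    (ht : t ∈ 𝒜 1) (hreg : IsSMulRegular (A ⧸ I) t) :
    quotientHilbertSeries 𝒜 (I ⊔ Ideal.span {t}) =
      quotientHilbertSeries 𝒜 I * (1 - PowerSeries.X) := by
  ext n
  have hrank := finrank_map_mk_add_finrank_map_inf (le_sup_left : I ≤ I ⊔ Ideal.span {t}) (𝒜 n)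
  rw [mul_sub, mul_one, map_sub]
  cases n with
  | zero =>
    rw [map_sup_span_inf_zero hI ht, finrank_bot, add_zero] at hrank
    simp [quotientHilbertSeries, hrank]
  | succ n =>
    have hinj : Function.Injective (LinearMap.mulLeft K (t : A ⧸ I)) := hreg
    rw [map_sup_span_inf_succ hI ht,
      ((Submodule.equivMapOfInjective _ hinj _).finrank_eq).symm] at hrank
    simp only [quotientHilbertSeries, PowerSeries.coeff_succ_mul_X, PowerSeries.coeff_mk, ← hrank]
    push_cast
    ring

open RingTheory.Sequence in
theorem quotientHilbertSeries_ofList [∀ n, Module.Finite K (𝒜 n)] {l : List A}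
    (hl : ∀ t ∈ l, t ∈ 𝒜 1) (hreg : IsWeaklyRegular A l) :
    quotientHilbertSeries 𝒜 (Ideal.ofList l) =
      quotientHilbertSeries 𝒜 ⊥ * (1 - PowerSeries.X) ^ l.length := by
  induction l using List.reverseRecOn with
  | nil => simp
  | append_singleton l t ih =>
    rw [isWeaklyRegular_append_iff, isWeaklyRegular_singleton_iff, smul_eq_mul, Ideal.mul_top]
      at hreg
    have hhom : (Ideal.ofList l).IsHomogeneous 𝒜 :=
      Ideal.homogeneous_span 𝒜 _ fun u hu => ⟨1, hl u (List.mem_append_left _ hu)⟩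
    rw [Ideal.ofList_append, Ideal.ofList_singleton,
      quotientHilbertSeries_sup_span hhom (hl t (by simp)) hreg.2,
      ih (fun u hu => hl u (List.mem_append_left _ hu)) hreg.1, List.length_append,
      List.length_singleton, pow_succ, mul_assoc]

theorem mem_ofList_of_natDegree_lt [∀ n, Module.Finite K (𝒜 n)] {l : List A}
    (hl : ∀ t ∈ l, t ∈ 𝒜 1) (hreg : RingTheory.Sequence.IsWeaklyRegular A l) {h : Polynomial ℤ}
    (hh : (h : PowerSeries ℤ) =
      (.mk fun n => (Module.finrank K (𝒜 n) : ℤ)) * (1 - PowerSeries.X) ^ l.length)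
    {n : ℕ} (hn : h.natDegree < n) {x : A} (hx : x ∈ 𝒜 n) : x ∈ Ideal.ofList l := by
  rw [← quotientHilbertSeries_bot, ← quotientHilbertSeries_ofList hl hreg] at hh
  have hcoeff := congr(PowerSeries.coeff n $hh)
  rw [Polynomial.coeff_coe, Polynomial.coeff_eq_zero_of_natDegree_lt hn, quotientHilbertSeries,
    PowerSeries.coeff_mk, eq_comm, Nat.cast_eq_zero, Submodule.finrank_eq_zero] at hcoeff
  exact Ideal.Quotient.eq_zero_iff_mem.1
    ((Submodule.mem_bot K).1 (hcoeff ▸ Submodule.mem_map_of_mem hx))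

end HilbertSeries

section Veronese

variable {K A : Type*} [CommRing K] [CommRing A] [Algebra K A] {𝒜 : ℕ → Submodule K A}
  [GradedAlgebra 𝒜]

lemma mem_veroneseLsopIdealComponent_iff {d : ℕ} {θ : Fin d → A} (hθ : ∀ j, θ j ∈ 𝒜 1) {r : ℕ}
    (hr : 1 ≤ r) {i : ℕ} {x : A} (hx : x ∈ 𝒜 (i * r)) :
    x ∈ veroneseLsopIdealComponent K 𝒜 θ r i ↔
      x ∈ Ideal.span (Set.range fun j => θ j ^ r) := by
  have hθr (j : Fin d) : θ j ^ r ∈ 𝒜 r := by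
    simpa only [smul_eq_mul, mul_one] using SetLike.pow_mem_graded r (hθ j)
  cases i with
  | zero =>
    rw [zero_mul] at hx
    exact ⟨fun h => (Submodule.mem_bot K).1 h ▸ zero_mem _, fun h => (Submodule.mem_bot K).2
      (eq_zero_of_mem_span_range_of_lt hθr hr hx h)⟩
  | succ i =>
    constructor
    · have hle : veroneseLsopIdealComponent K 𝒜 θ r (i + 1) ≤
          (Ideal.span (Set.range fun j => θ j ^ r)).restrictScalars K := by
        refine iSup_le fun j => ?_
        rintro _ ⟨y, -, rfl⟩
        exact Ideal.mul_mem_right _ _ (Ideal.subset_span ⟨j, rfl⟩)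
      exact fun h => hle h
    · intro h
      rw [Nat.succ_mul] at hx
      obtain ⟨y, hy, rfl⟩ := exists_eq_sum_mul_of_mem_span_range hθr hx h
      exact sum_mem fun j _ => Submodule.mem_iSup_of_mem j ⟨y j, hy j, rfl⟩

lemma map_powIdeal_pred {K A σ : Type*} [CommRing K] [CommRing A] [Algebra (MvPolynomial σ K) A]
    {θ : σ → A} (hX : ∀ j, algebraMap (MvPolynomial σ K) A (X j) = θ j) {r : ℕ} (hr : 1 ≤ r) :
    (powIdeal K fun _ : σ => r - 1).map (algebraMap (MvPolynomial σ K) A) =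
      Ideal.span (Set.range fun j => θ j ^ r) := by
  rw [powIdeal, Ideal.map_span, ← Set.range_comp]
  simp only [Function.comp_def, map_pow, hX, Nat.sub_add_cancel hr]

end Veronese

section WeakLefschetz

variable {K A ι : Type*} [Field K] [CharZero K] [CommRing A] [Algebra K A] {𝒜 : ℕ → Submodule K A}
  [GradedAlgebra 𝒜] {d : ℕ} [Algebra (MvPolynomial (Fin d) K) A]
  [IsScalarTower K (MvPolynomial (Fin d) K) A] {θ : Fin d → A} {deg : ι → ℕ} {r s i : ℕ}

theorem mem_veroneseLsopIdealComponent_of_varSum_pow_mul_mem (hθ : ∀ j, θ j ∈ 𝒜 1)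
    (hX : ∀ j, algebraMap (MvPolynomial (Fin d) K) A (X j) = θ j)
    (e : Module.Basis ι (MvPolynomial (Fin d) K) A) (he : ∀ b, e b ∈ 𝒜 (deg b)) (hr : 1 ≤ r)
    (hdr : d ≤ r) (hi : 2 * i + 2 ≤ d) {x : A} (hx : x ∈ 𝒜 (i * r))
    (h : algebraMap (MvPolynomial (Fin d) K) A (varSum (Fin d) K ^ r) * x ∈
      veroneseLsopIdealComponent K 𝒜 θ r (i + 1)) :
    x ∈ veroneseLsopIdealComponent K 𝒜 θ r i := by
  have hwx : algebraMap (MvPolynomial (Fin d) K) A (varSum (Fin d) K ^ r) * x ∈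
      𝒜 ((i + 1) * r) := by
    rw [Nat.succ_mul, add_comm]
    exact SetLike.GradedMul.mul_mem (algebraMap_varSum_pow_mem (fun j => hX j ▸ hθ j) r) hx
  have hmap := map_powIdeal_pred hX hr
  rw [mem_veroneseLsopIdealComponent_iff hθ hr hwx, ← hmap] at h
  rw [mem_veroneseLsopIdealComponent_iff hθ hr hx, ← hmap]
  refine mem_map_powIdeal_of_varSum_pow_mul_mem (fun j => hX j ▸ hθ j) e he _ ?_ hx h
  obtain ⟨r, rfl⟩ := Nat.exists_eq_add_of_le' hr
  simp only [Finset.sum_const, Finset.card_univ, Fintype.card_fin, smul_eq_mul,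
    Nat.add_sub_cancel]
  nlinarith

theorem exists_sub_varSum_pow_mul_mem_veroneseLsopIdealComponent (hθ : ∀ j, θ j ∈ 𝒜 1)
    (hX : ∀ j, algebraMap (MvPolynomial (Fin d) K) A (X j) = θ j)
    (e : Module.Basis ι (MvPolynomial (Fin d) K) A) (he : ∀ b, e b ∈ 𝒜 (deg b))
    (hs : ∀ b, deg b ≤ s) (hr : 1 ≤ r) (hsr : 2 * s ≤ r + d) (hi : d ≤ 2 * i) {y : A}
    (hy : y ∈ 𝒜 ((i + 1) * r)) :
    ∃ x ∈ 𝒜 (i * r), y - algebraMap (MvPolynomial (Fin d) K) A (varSum (Fin d) K ^ r) * x ∈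
      veroneseLsopIdealComponent K 𝒜 θ r (i + 1) := by
  have hw := algebraMap_varSum_pow_mem (fun j => hX j ▸ hθ j) r
  have hhom : (Ideal.span (Set.range fun j => θ j ^ r)).IsHomogeneous 𝒜 :=
    Ideal.homogeneous_span 𝒜 _ (by rintro _ ⟨j, rfl⟩; exact ⟨_, SetLike.pow_mem_graded r (hθ j)⟩)
  have hmap := map_powIdeal_pred hX hr
  have hdegree : ∑ _ : Fin d, (r - 1) + r + 2 * s ≤ 2 * ((i + 1) * r) := by
    obtain ⟨r, rfl⟩ := Nat.exists_eq_add_of_le' hr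
    simp only [Finset.sum_const, Finset.card_univ, Fintype.card_fin, smul_eq_mul,
      Nat.add_sub_cancel]
    nlinarith
  have hmem := mem_span_varSum_pow_sup_map_powIdeal (fun j => hX j ▸ hθ j) e he hs _ hdegree hy
  rw [hmap, sup_comm] at hmem
  obtain ⟨x, hx, hyx⟩ :=
    exists_sub_mul_mem_of_mem_sup_span hhom hw (Nat.succ_mul i r ▸ hy) hmem
  refine ⟨x, hx, (mem_veroneseLsopIdealComponent_iff hθ hr (sub_mem hy ?_)).2 hyx⟩
  rw [Nat.succ_mul, add_comm]
  exact SetLike.GradedMul.mul_mem hw hx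

end WeakLefschetz

end VeroneseLefschetz

open VeroneseLefschetz MvPolynomial in
theorem veronese_weak_Lefschetz_even_general {K A : Type*} [Field K] [CharZero K] [CommRing A]
    [Algebra K A] (𝒜 : ℕ → Submodule K A) [GradedAlgebra 𝒜] {d : ℕ} (hd : Even d)
    {θ : Fin d → A} (hθ : ∀ j, θ j ∈ 𝒜 1)
    (hreg : RingTheory.Sequence.IsWeaklyRegular A (List.ofFn θ)) {s : ℕ}
    (hs : ∀ n, s < n → ∀ x ∈ 𝒜 n, x ∈ Ideal.span (Set.range θ)) {r : ℕ} (hr : 1 ≤ r)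
    (hdr : d ≤ r) (hsr : 2 * s ≤ r + d) :
    ∃ w ∈ 𝒜 r, ∀ i : ℕ,
      (∀ x ∈ 𝒜 (i * r),
        w * x ∈ veroneseLsopIdealComponent K 𝒜 θ r (i + 1) →
          x ∈ veroneseLsopIdealComponent K 𝒜 θ r i) ∨
      (∀ y ∈ 𝒜 ((i + 1) * r), ∃ x ∈ 𝒜 (i * r),
        y - w * x ∈ veroneseLsopIdealComponent K 𝒜 θ r (i + 1)) := by
  algebraize [(aeval θ : MvPolynomial (Fin d) K →ₐ[K] A).toRingHom]
  have : IsScalarTower K (MvPolynomial (Fin d) K) A := .of_algHom (aeval θ)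
  have hX (j : Fin d) : algebraMap (MvPolynomial (Fin d) K) A (X j) = θ j := aeval_X θ j
  obtain ⟨ι, e, deg, he, heθ⟩ := exists_homogeneous_basis (K := K) (d := d) 𝒜
    (fun j => hX j ▸ hθ j) (by simpa only [hX] using hreg)
  simp only [hX] at heθ
  have hdeg (b : ι) : deg b ≤ s := not_lt.1 fun hb => heθ b (hs _ hb _ (he b))
  refine ⟨_, algebraMap_varSum_pow_mem (fun j => hX j ▸ hθ j) r, fun i => ?_⟩
  obtain hi | hi := lt_or_ge (2 * i) d
  · have hi' : 2 * i + 2 ≤ d := by grind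
    exact .inl fun x => mem_veroneseLsopIdealComponent_of_varSum_pow_mul_mem hθ hX e he hr hdr hi'
  · exact .inr fun y =>
      exists_sub_varSum_pow_mul_mem_veroneseLsopIdealComponent hθ hX e he hdeg hr hsr hi

/-- **Theorem 1.2(ii), Kubitzke–Murai.**
Let `A` be a Cohen-Macaulay standard graded `K`-algebra of even Krull dimension `d` over a
field of characteristic `0`, `Θ = θ₁,…,θ_d` an l.s.o.p. for `A`, and
`r ≥ max{d, 2 deg h_A(t) - d}`.  Then `A_Θ^⟨r⟩` (whose degree-`i` component is
`𝒜 (i*r) ⧸ veroneseLsopIdealComponent K 𝒜 θ r i`) has the weak Lefschetz property: there is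
a linear form `w` (represented by an element of `𝒜 r = (A^⟨r⟩)_1`) such that multiplication
by `w` from the degree-`i` to the degree-`(i+1)` component is injective or surjective for
every `i ≥ 0`. -/
theorem veronese_weak_Lefschetz_even
    (K : Type*) [Field K] [CharZero K]
    (A : Type*) [CommRing A] [Algebra K A]
    (𝒜 : ℕ → Submodule K A) [GradedAlgebra 𝒜]
    (hstd : ∀ i, 𝒜 i = 𝒜 1 ^ i)
    (hfin : ∀ i, Module.Finite K (𝒜 i))
    (d : ℕ) (hdeven : Even d) (hdim : ringKrullDim A = d)
    (hCM : ∀ θ' : Fin d → A, (∀ j, θ' j ∈ 𝒜 1) →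
      Module.Finite K (A ⧸ Ideal.span (Set.range θ')) →
      RingTheory.Sequence.IsRegular A (List.ofFn θ'))
    (θ : Fin d → A) (hθ1 : ∀ j, θ j ∈ 𝒜 1)
    (hθlsop : Module.Finite K (A ⧸ Ideal.span (Set.range θ)))
    (h : Polynomial ℤ)
    (hh : (h : PowerSeries ℤ) =
      (PowerSeries.mk fun i => (Module.finrank K (𝒜 i) : ℤ)) * (1 - PowerSeries.X) ^ d)
    (r : ℕ) (hr : 1 ≤ r) (hrbound : max d (2 * h.natDegree - d) ≤ r) :
    ∃ w ∈ 𝒜 r, ∀ i : ℕ,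
      (∀ x ∈ 𝒜 (i * r),
        w * x ∈ veroneseLsopIdealComponent K 𝒜 θ r (i + 1) →
          x ∈ veroneseLsopIdealComponent K 𝒜 θ r i) ∨
      (∀ y ∈ 𝒜 ((i + 1) * r), ∃ x ∈ 𝒜 (i * r),
        y - w * x ∈ veroneseLsopIdealComponent K 𝒜 θ r (i + 1)) := by
  have hreg := (hCM θ hθ1 hθlsop).toIsWeaklyRegular
  refine veronese_weak_Lefschetz_even_general 𝒜 hdeven hθ1 hreg (s := h.natDegree)
    (fun n hn x hx => ?_) hr (by omega) (by omega)
  have hmem := VeroneseLefschetz.mem_ofList_of_natDegree_lt (by simpa using hθ1) hreg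
    (by rwa [List.length_ofFn]) hn hx
  rwa [← VeroneseLefschetz.ideal_ofList_ofFn]
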